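/- arXiv:2107.09937 — 6 statements merged into one kernel-verified Lean document; each statement's English description precedes it below -/
import Mathlib

section
/- Let E be a real normed space, H a real inner product space, φ : E → H a feature map, and f : ℝ → ℝ an antitone (non-increasing) function such that ⟨φ(u), φ(v)⟩ = f(‖u − v‖) for all u, v ∈ E. Then for every c ≥ 0, every x ∈ E and every δ ∈ E with ‖δ‖ ≤ c, one has ‖φ(x + δ) − φ(x)‖ ≤ √(2·f(0) − 2·f(c)). -/
open scoped RealInnerProductSpace

section RadialKernel

variable {X H : Type*} [PseudoMetricSpace X] [SeminormedAddCommGroup H] [InnerProductSpace ℝ H]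
  {φ : X → H} {f : ℝ → ℝ}

theorem norm_sub_sq_of_inner_eq_dist (hk : ∀ u v : X, ⟪φ u, φ v⟫ = f (dist u v)) (u v : X) :
    ‖φ u - φ v‖ ^ 2 = 2 * f 0 - 2 * f (dist u v) := by
  have norm_sq_eq (w : X) : ‖φ w‖ ^ 2 = f 0 := by
    rw [← real_inner_self_eq_norm_sq, hk, dist_self]
  rw [norm_sub_sq_real, norm_sq_eq, norm_sq_eq, hk]
  ring

theorem featureMap_perturbation_norm_le_general (hf : AntitoneOn f (Set.Ici 0))
    (hk : ∀ u v : X, ⟪φ u, φ v⟫ = f (dist u v)) {c : ℝ} {u v : X} (huv : dist u v ≤ c) :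
    ‖φ u - φ v‖ ≤ Real.sqrt (2 * f 0 - 2 * f c) := by
  have f_le : f c ≤ f (dist u v) := hf dist_nonneg (dist_nonneg.trans huv) huv
  apply Real.le_sqrt_of_sq_le
  calc ‖φ u - φ v‖ ^ 2 = 2 * f 0 - 2 * f (dist u v) := norm_sub_sq_of_inner_eq_dist hk u v
    _ ≤ 2 * f 0 - 2 * f c := by gcongr

end RadialKernel

/-- Perturbation bound in the kernel space: if the kernel is translation-invariant and radial,
`⟪φ u, φ v⟫ = f ‖u - v‖` with `f` antitone, then a perturbation of norm at most `c` in the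
original space moves the feature image by at most `√(2 f 0 - 2 f c)`. -/
theorem featureMap_perturbation_norm_le
    {E H : Type*} [NormedAddCommGroup E] [NormedSpace ℝ E]
    [NormedAddCommGroup H] [InnerProductSpace ℝ H]
    (φ : E → H) (f : ℝ → ℝ) (hf : Antitone f)
    (hk : ∀ u v : E, ⟪φ u, φ v⟫ = f ‖u - v‖) :
    ∀ c : ℝ, 0 ≤ c → ∀ x δ : E, ‖δ‖ ≤ c →
      ‖φ (x + δ) - φ x‖ ≤ Real.sqrt (2 * f 0 - 2 * f c) := by
  intro c _ x δ hδ
  exact featureMap_perturbation_norm_le_general (hf.antitoneOn _)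
    (by simpa only [dist_eq_norm_sub] using hk) (by simpa only [dist_self_add_left] using hδ)
end

section
/- Let H be a real inner product space, w ∈ H, v ∈ H, b ∈ ℝ, ε′ ≥ 0, and y ∈ {−1, +1}. Then the value [1 − y·⟨w, v⟩ + ε′·‖w‖ − y·b]₊ is the greatest element (IsGreatest) of the set { [1 − y·(⟨w, v + δ⟩ + b)]₊ : δ ∈ H, ‖δ‖ ≤ ε′ }. In particular, the maximization problem max_{‖δ‖ ≤ ε′} [1 − y·(⟨w, v + δ⟩ + b)]₊ has closed-form optimal value [1 − y·⟨w, v⟩ + ε′·‖w‖ − y·b]₊. -/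
open scoped RealInnerProductSpace

theorem isGreatest_inner_image_closedBall
    {H : Type*} [SeminormedAddCommGroup H] [InnerProductSpace ℝ H]
    (w c : H) {r : ℝ} (hr : 0 ≤ r) :
    IsGreatest ((fun x ↦ ⟪w, x⟫) '' Metric.closedBall c r) (⟪w, c⟫ + r * ‖w‖) := by
  constructor
  · -- If `‖w‖ = 0`, then `r / ‖w‖ = 0` and this maximizer is the centre.
    refine ⟨c + (r / ‖w‖) • w, ?_, ?_⟩
    · rw [add_mem_closedBall_iff_norm, norm_smul, norm_div, norm_norm, Real.norm_of_nonneg hr,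
        div_mul_eq_mul_div, mul_div_assoc]
      exact mul_le_of_le_one_right hr (div_self_le_one ‖w‖)
    · calc
        ⟪w, c + (r / ‖w‖) • w⟫ = ⟪w, c⟫ + r * (‖w‖ * ‖w‖ / ‖w‖) := by
          rw [inner_add_right, real_inner_smul_right, real_inner_self_eq_norm_mul_norm]
          ring
        _ = ⟪w, c⟫ + r * ‖w‖ := by rw [mul_self_div_self]
  · rintro _ ⟨x, hx, rfl⟩
    calc
      ⟪w, x⟫ = ⟪w, c⟫ + ⟪w, x - c⟫ := by rw [← inner_add_right, add_sub_cancel]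
      _ ≤ ⟪w, c⟫ + ‖w‖ * ‖x - c‖ := by gcongr; exact real_inner_le_norm w (x - c)
      _ ≤ ⟪w, c⟫ + ‖w‖ * r := by gcongr; exact mem_closedBall_iff_norm.mp hx
      _ = ⟪w, c⟫ + r * ‖w‖ := by rw [mul_comm]

theorem setOf_exists_norm_le_eq_image_closedBall
    {E α : Type*} [SeminormedAddCommGroup E] (f : E → α) (c : E) (r : ℝ) :
    {a : α | ∃ δ : E, ‖δ‖ ≤ r ∧ a = f (c + δ)} = f '' Metric.closedBall c r := by
  ext a
  constructor
  · rintro ⟨δ, hδ, rfl⟩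
    exact ⟨c + δ, add_mem_closedBall_iff_norm.mpr hδ, rfl⟩
  · rintro ⟨x, hx, rfl⟩
    exact ⟨x - c, mem_closedBall_iff_norm.mp hx, by rw [add_sub_cancel]⟩

theorem adversarial_hinge_isGreatest_general
    {H : Type*} [SeminormedAddCommGroup H] [InnerProductSpace ℝ H]
    (w v : H) (b y : ℝ) {ε : ℝ} (hε : 0 ≤ ε) :
    IsGreatest
      {r : ℝ | ∃ δ : H, ‖δ‖ ≤ ε ∧ r = max (1 - y * (⟪w, v + δ⟫ + b)) 0}
      (max (1 - y * ⟪w, v⟫ + ε * (|y| * ‖w‖) - y * b) 0) := by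
  have hmono : Monotone fun t : ℝ ↦ max (1 - y * b + t) 0 := fun _ _ hst ↦ by
    dsimp only
    gcongr
  have hloss (x : H) : max (1 - y * b + ⟪(-y) • w, x⟫) 0 = max (1 - y * (⟪w, x⟫ + b)) 0 := by
    rw [real_inner_smul_left]
    ring_nf
  have hvalue : 1 - y * ⟪w, v⟫ + ε * (|y| * ‖w‖) - y * b =
      1 - y * b + (⟪(-y) • w, v⟫ + ε * ‖(-y) • w‖) := by
    rw [real_inner_smul_left, norm_smul, norm_neg, Real.norm_eq_abs]
    ring
  rw [setOf_exists_norm_le_eq_image_closedBall (fun x ↦ max (1 - y * (⟪w, x⟫ + b)) 0), hvalue]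
  simpa only [Set.image_image, hloss] using
    hmono.map_isGreatest (isGreatest_inner_image_closedBall ((-y) • w) v hε)

/-- Theorem 2 of the paper: the adversarial hinge loss
`max_{‖δ‖ ≤ ε'} [1 - y(⟨w, v + δ⟩ + b)]₊` has closed-form optimal value
`[1 - y⟨w, v⟩ + ε'‖w‖ - yb]₊`, i.e. the latter is the greatest element of the set of
attainable losses. -/
theorem adversarial_hinge_isGreatest
    {H : Type*} [NormedAddCommGroup H] [InnerProductSpace ℝ H]
    (w v : H) (b ε' : ℝ) (hε' : 0 ≤ ε') (y : ℝ) (hy : y = 1 ∨ y = -1) :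
    IsGreatest
      {r : ℝ | ∃ δ : H, ‖δ‖ ≤ ε' ∧ r = max (1 - y * (⟪w, v + δ⟫ + b)) 0}
      (max (1 - y * ⟪w, v⟫ + ε' * ‖w‖ - y * b) 0) := by
  have hy_abs : |y| = 1 := (abs_eq zero_le_one).mpr hy
  simpa only [hy_abs, one_mul] using adversarial_hinge_isGreatest_general w v b y hε'
end

section
/- Let H be a real inner product space, n ≥ 1, C > 0, ε′ ≥ 0, and let (v_i, y_i) for i = 1, …, n satisfy v_i ∈ H and y_i ∈ {−1, +1}. Then for every w ∈ H and b ∈ ℝ, (1/2)‖w‖² + (C/n)·Σ_{i=1}^n sup{ [1 − y_i·(⟨w, v_i + δ⟩ + b)]₊ : δ ∈ H, ‖δ‖ ≤ ε′ } = (1/2)‖w‖² + (C/n)·Σ_{i=1}^n [1 − y_i·⟨w, v_i⟩ + ε′·‖w‖ − y_i·b]₊. That is, the min–max adversarial training objective of kernel SVM coincides pointwise with the convex regularized-loss objective. -/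
open scoped RealInnerProductSpace

/-!
By Cauchy–Schwarz, the minimum of `⟪w, ·⟫` over the closed ball of radius `r` is `-(r * ‖w‖)`,
attained by moving a distance `r` against `w`. Applied to `y • w`, this gives the worst-case margin
of a perturbed sample with label `y`, and a loss that decreases with the margin is largest exactly
where the margin is smallest.
-/

section WorstCasePerturbation

open Metric Set

variable {H : Type*} [SeminormedAddCommGroup H] [InnerProductSpace ℝ H]

theorem real_inner_inv_norm_smul_self (w : H) : ⟪w, ‖w‖⁻¹ • w⟫ = ‖w‖ := by
  rw [real_inner_smul_right, real_inner_self_eq_norm_mul_norm, ← mul_assoc, inv_mul_mul_self]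

theorem isLeast_real_inner_image_closedBall (w : H) {r : ℝ} (hr : 0 ≤ r) :
    IsLeast ((fun δ ↦ ⟪w, δ⟫) '' closedBall 0 r) (-(r * ‖w‖)) := by
  constructor
  · refine ⟨-(r • ‖w‖⁻¹ • w), ?_, ?_⟩
    · have norm_direction_le_one : ‖‖w‖⁻¹ • w‖ ≤ 1 :=
        mem_closedBall_zero_iff.mp (inv_norm_smul_mem_unitClosedBall w)
      rw [mem_closedBall_zero_iff, norm_neg, norm_smul_of_nonneg hr]
      exact mul_le_of_le_one_right hr norm_direction_le_one
    · simp only [inner_neg_right, real_inner_smul_right w _ r, real_inner_inv_norm_smul_self]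
  · rintro _ ⟨δ, hδ, rfl⟩
    rw [mem_closedBall_zero_iff] at hδ
    calc -(r * ‖w‖) ≤ -(‖δ‖ * ‖w‖) := by gcongr
      _ = -(‖w‖ * ‖δ‖) := by rw [mul_comm]
      _ ≤ ⟪w, δ⟫ := neg_le_of_abs_le (abs_real_inner_le_norm w δ)

theorem isLeast_margin_image_closedBall (w v : H) (y b : ℝ) {r : ℝ} (hr : 0 ≤ r) :
    IsLeast ((fun δ ↦ y * (⟪w, v + δ⟫ + b)) '' closedBall 0 r)
      (y * (⟪w, v⟫ + b) - r * (|y| * ‖w‖)) := by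
  have margin_eq (δ : H) : y * (⟪w, v + δ⟫ + b) = y * (⟪w, v⟫ + b) + ⟪y • w, δ⟫ := by
    rw [inner_add_right, real_inner_smul_left]
    ring
  have isLeast_add := (add_right_mono (a := y * (⟪w, v⟫ + b))).map_isLeast
    (isLeast_real_inner_image_closedBall (y • w) hr)
  simpa only [image_image, margin_eq, norm_smul, Real.norm_eq_abs, sub_eq_add_neg]
    using isLeast_add

theorem isGreatest_antitone_loss_margin_image_closedBall {α : Type*} [Preorder α] {ℓ : ℝ → α}
    (hℓ : Antitone ℓ) (w v : H) (y b : ℝ) {r : ℝ} (hr : 0 ≤ r) :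
    IsGreatest ((fun δ ↦ ℓ (y * (⟪w, v + δ⟫ + b))) '' closedBall 0 r)
      (ℓ (y * (⟪w, v⟫ + b) - r * (|y| * ‖w‖))) := by
  simpa only [image_image] using hℓ.map_isLeast (isLeast_margin_image_closedBall w v y b hr)

end WorstCasePerturbation

theorem antitone_hinge : Antitone fun t : ℝ ↦ max (1 - t) 0 :=
  fun _ _ hst ↦ max_le_max_right 0 (sub_le_sub_left hst 1)

theorem adversarial_training_objective_eq_general {ι H : Type*} [Fintype ι]
    [SeminormedAddCommGroup H] [InnerProductSpace ℝ H] {ℓ : ℝ → ℝ} (hℓ : Antitone ℓ)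
    (c : ℝ) {ε' : ℝ} (hε' : 0 ≤ ε') (v : ι → H) (y : ι → ℝ) (w : H) (b : ℝ) :
    (1 / 2) * ‖w‖ ^ 2 + c * ∑ i,
        sSup {r : ℝ | ∃ δ : H, ‖δ‖ ≤ ε' ∧ r = ℓ (y i * (⟪w, v i + δ⟫ + b))}
      = (1 / 2) * ‖w‖ ^ 2 + c * ∑ i,
          ℓ (y i * (⟪w, v i⟫ + b) - ε' * (|y i| * ‖w‖)) := by
  congr! 3 with i
  simpa only [Set.image, mem_closedBall_zero_iff, eq_comm] using
    (isGreatest_antitone_loss_margin_image_closedBall hℓ w (v i) (y i) b hε').csSup_eq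

/-- Reduction of the min–max adversarial training objective of kernel SVM (Eq. (4)) to the
convex regularized-loss objective (Eq. (5)): the two objectives coincide pointwise. -/
theorem adversarial_training_objective_eq
    {H : Type*} [NormedAddCommGroup H] [InnerProductSpace ℝ H]
    (n : ℕ) (hn : 1 ≤ n) (C ε' : ℝ) (hC : 0 < C) (hε' : 0 ≤ ε')
    (v : Fin n → H) (y : Fin n → ℝ) (hy : ∀ i, y i = 1 ∨ y i = -1)
    (w : H) (b : ℝ) :
    (1 / 2) * ‖w‖ ^ 2 + (C / n) * ∑ i,
        sSup {r : ℝ | ∃ δ : H, ‖δ‖ ≤ ε' ∧ r = max (1 - y i * (⟪w, v i + δ⟫ + b)) 0}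
      = (1 / 2) * ‖w‖ ^ 2 + (C / n) * ∑ i,
          max (1 - y i * ⟪w, v i⟫ + ε' * ‖w‖ - y i * b) 0 := by
  have abs_label (i : Fin n) : |y i| = 1 := (abs_eq zero_le_one).mpr (hy i)
  have shifted_margin (i : Fin n) : 1 - (y i * (⟪w, v i⟫ + b) - ε' * (|y i| * ‖w‖)) =
      1 - y i * ⟪w, v i⟫ + ε' * ‖w‖ - y i * b := by
    rw [abs_label]
    ring
  simpa only [shifted_margin] using
    adversarial_training_objective_eq_general antitone_hinge (C / n) hε' v y w b
end

section
/- Let θ ∈ (1/2, 1], let t ≥ 1 be a natural number, and let s : ℕ → ℝ satisfy 1/θ ≤ s_j ≤ j/θ for all 2 ≤ j ≤ t. For 1 ≤ i ≤ t define a_t^i := (θ/i) · ∏_{j=i+1}^{t} (1 − (θ/j)·s_j). Then 0 ≤ a_t^i ≤ θ/t for every 1 ≤ i ≤ t, and Σ_{i=1}^{t} (a_t^i)² ≤ θ²/t. -/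
/-!
The quantity `γ_i ∏_{j=i+1}^t c_j` is multiplied by `c_{t+1} ≥ 0` when `t` grows by one, so it stays
below `γ_t` as soon as `γ_j c_{j+1} ≤ γ_{j+1}` for all `j`. For `γ_j = θ/j` that condition follows
from `c_{j+1} ≤ 1 - 1/(j+1)`, because `(θ/j)(1 - 1/(j+1)) = θ/(j+1)`. The sum of squares then has
`t` terms, each at most `(θ/t)²`.
-/

theorem mul_prod_Icc_succ_le_of_step_le {R : Type*} [CommMonoidWithZero R] [Preorder R]
    [MulPosMono R] {γ c : ℕ → R} {i t : ℕ} (hit : i ≤ t)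
    (hc : ∀ j ∈ Finset.Icc (i + 1) t, 0 ≤ c j)
    (hstep : ∀ j ∈ Finset.Ico i t, γ j * c (j + 1) ≤ γ (j + 1)) :
    γ i * ∏ j ∈ Finset.Icc (i + 1) t, c j ≤ γ t := by
  induction t, hit using Nat.le_induction with
  | base => simp
  | succ t hit ih =>
    have hprefix : γ i * ∏ j ∈ Finset.Icc (i + 1) t, c j ≤ γ t :=
      ih (fun j hj => hc j (Finset.Icc_subset_Icc_right t.le_succ hj))
        (fun j hj => hstep j (Finset.Ico_subset_Ico_right t.le_succ hj))
    calc γ i * ∏ j ∈ Finset.Icc (i + 1) (t + 1), c j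
        = (γ i * ∏ j ∈ Finset.Icc (i + 1) t, c j) * c (t + 1) := by
          rw [Finset.prod_Icc_succ_top (by omega), mul_assoc]
      _ ≤ γ t * c (t + 1) :=
          mul_le_mul_of_nonneg_right hprefix (hc _ (Finset.mem_Icc.2 ⟨by omega, le_rfl⟩))
      _ ≤ γ (t + 1) := hstep t (Finset.mem_Ico.2 ⟨hit, t.lt_succ_self⟩)

section LinearOrderedField

variable {K : Type*} [Field K] [LinearOrder K] [IsStrictOrderedRing K]

theorem one_sub_div_mul_mem_Icc {θ x s : K} (hθ : 0 < θ) (hx : 0 < x)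
    (hs : s ∈ Set.Icc (1 / θ) (x / θ)) : 1 - θ / x * s ∈ Set.Icc 0 (1 - 1 / x) := by
  have hlower : 1 ≤ θ * s := (div_le_iff₀' hθ).1 hs.1
  have hupper : θ * s ≤ x := (le_div_iff₀' hθ).1 hs.2
  rw [div_mul_eq_mul_div]
  exact ⟨sub_nonneg.2 ((div_le_one hx).2 hupper), by gcongr⟩

theorem div_mul_prod_Icc_succ_mem_Icc {θ : K} (hθ : 0 ≤ θ) {i t : ℕ} (hi : 1 ≤ i) (hit : i ≤ t)
    {c : ℕ → K} (hc : ∀ j ∈ Finset.Icc (i + 1) t, c j ∈ Set.Icc 0 (1 - 1 / (j : K))) :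
    θ / i * ∏ j ∈ Finset.Icc (i + 1) t, c j ∈ Set.Icc 0 (θ / t) := by
  have hstep : ∀ j ∈ Finset.Ico i t, θ / (j : K) * c (j + 1) ≤ θ / ((j + 1 : ℕ) : K) := by
    intro j hj
    obtain ⟨hij, hjt⟩ := Finset.mem_Ico.1 hj
    have hj0 : (j : K) ≠ 0 := by exact_mod_cast (by omega : j ≠ 0)
    calc θ / (j : K) * c (j + 1)
        ≤ θ / (j : K) * (1 - 1 / ((j + 1 : ℕ) : K)) :=
          mul_le_mul_of_nonneg_left (hc _ (Finset.mem_Icc.2 ⟨by omega, hjt⟩)).2 (by positivity)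
      _ = θ / ((j + 1 : ℕ) : K) := by
          push_cast
          field_simp
          ring
  exact ⟨mul_nonneg (by positivity) (Finset.prod_nonneg fun j hj => (hc j hj).1),
    mul_prod_Icc_succ_le_of_step_le (γ := fun j => θ / (j : K)) hit (fun j hj => (hc j hj).1) hstep⟩

theorem dsg_coeff_bounds_diminishing_general {θ : K} (hθ : 0 < θ) {t : ℕ} (ht : 1 ≤ t) {s : ℕ → K}
    (hs : ∀ j : ℕ, 2 ≤ j → j ≤ t → 1 / θ ≤ s j ∧ s j ≤ (j : K) / θ) {a : ℕ → K}
    (ha : ∀ i : ℕ, 1 ≤ i → i ≤ t →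
      a i = (θ / i) * ∏ j ∈ Finset.Icc (i + 1) t, (1 - (θ / j) * s j)) :
    (∀ i : ℕ, 1 ≤ i → i ≤ t → 0 ≤ a i ∧ a i ≤ θ / t)
      ∧ ∑ i ∈ Finset.Icc 1 t, (a i) ^ 2 ≤ θ ^ 2 / t := by
  have coeff_bounds : ∀ i : ℕ, 1 ≤ i → i ≤ t → 0 ≤ a i ∧ a i ≤ θ / t := by
    intro i hi hit
    rw [ha i hi hit]
    refine div_mul_prod_Icc_succ_mem_Icc hθ.le hi hit fun j hj => ?_
    obtain ⟨hij, hjt⟩ := Finset.mem_Icc.1 hj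
    exact one_sub_div_mul_mem_Icc hθ (by exact_mod_cast (by omega : 0 < j)) (hs j (by omega) hjt)
  have sq_le : ∀ i ∈ Finset.Icc 1 t, a i ^ 2 ≤ (θ / t) ^ 2 := by
    intro i hi
    obtain ⟨hi1, hit⟩ := Finset.mem_Icc.1 hi
    obtain ⟨hnonneg, hle⟩ := coeff_bounds i hi1 hit
    exact pow_le_pow_left₀ hnonneg hle 2
  have ht0 : (t : K) ≠ 0 := by exact_mod_cast (by omega : t ≠ 0)
  refine ⟨coeff_bounds, ?_⟩
  calc ∑ i ∈ Finset.Icc 1 t, a i ^ 2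
      ≤ (Finset.Icc 1 t).card • (θ / t) ^ 2 := Finset.sum_le_card_nsmul _ _ _ sq_le
    _ = θ ^ 2 / t := by
        rw [Nat.card_Icc, Nat.add_sub_cancel, nsmul_eq_mul, div_pow, sq (t : K), ← mul_div_assoc,
          mul_div_mul_left _ _ ht0]

end LinearOrderedField

/-- Coefficient bounds for the DSG update with diminishing stepsize `γ_j = θ/j`:
the coefficients `a_t^i = (θ/i) ∏_{j=i+1}^t (1 - (θ/j) s_j)` satisfy `0 ≤ a_t^i ≤ θ/t`
and `∑_{i=1}^t (a_t^i)² ≤ θ²/t`, provided `1/θ ≤ s_j ≤ j/θ` for `2 ≤ j ≤ t`. -/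
theorem dsg_coeff_bounds_diminishing (θ : ℝ) (hθ : θ ∈ Set.Ioc (1 / 2 : ℝ) 1)
    (t : ℕ) (ht : 1 ≤ t) (s : ℕ → ℝ)
    (hs : ∀ j : ℕ, 2 ≤ j → j ≤ t → 1 / θ ≤ s j ∧ s j ≤ (j : ℝ) / θ)
    (a : ℕ → ℝ)
    (ha : ∀ i : ℕ, 1 ≤ i → i ≤ t →
      a i = (θ / i) * ∏ j ∈ Finset.Icc (i + 1) t, (1 - (θ / j) * s j)) :
    (∀ i : ℕ, 1 ≤ i → i ≤ t → 0 ≤ a i ∧ a i ≤ θ / t)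
      ∧ ∑ i ∈ Finset.Icc 1 t, (a i) ^ 2 ≤ θ ^ 2 / t := by
  exact dsg_coeff_bounds_diminishing_general (by linarith [hθ.1]) ht hs ha
end

section
/- Let η ∈ (1, 2], β > 0 and β₀ > 0. Suppose the real sequence (Γ_t)_{t ≥ 1} satisfies Γ₁ ≥ 0 and Γ_{t+1} ≤ (1 − η/t)·Γ_t + β/t² for all t ≥ 1. Let R₀ := (β₀ + √(β₀² + 4(η − 1)β)) / (2(η − 1)) and R := max{Γ₁, 2β, R₀²}. Then Γ_t ≤ R/t for all t ≥ 1. -/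
/-! Since `(t - 1) / t² ≤ 1 / (t + 1)`, the bound `Γ t ≤ R / t` propagates from `t` to `t + 1` as
soon as `η ≤ t` and `β ≤ (η - 1) * R`. For `t = 1` the factor `1 - η / t` is negative and this
argument fails, but then `0 ≤ Γ 1` gives `Γ 2 ≤ β`, so that the induction can start at `t = 2` when
`2 * β ≤ R`. The constant `R₀` is the larger root of `(η - 1) * x² = β₀ * x + β`, whence
`β / (η - 1) ≤ R₀²`. -/

section OrderedField

variable {K : Type*} [Field K] [LinearOrder K] [IsStrictOrderedRing K] {η β R : K}

lemma one_sub_div_mul_add_div_sq_le_div_add_one {t x : K} (ht : 0 < t) (hηt : η ≤ t)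
    (hR : 0 ≤ R) (hβR : β ≤ (η - 1) * R) (hx : x ≤ R / t) :
    (1 - η / t) * x + β / t ^ 2 ≤ R / (t + 1) := by
  have hcoeff : 0 ≤ 1 - η / t := sub_nonneg.2 ((div_le_one ht).2 hηt)
  calc
    (1 - η / t) * x + β / t ^ 2 ≤ (1 - η / t) * (R / t) + (η - 1) * R / t ^ 2 := by gcongr
    _ = (t - 1) * R / t ^ 2 := by field_simp; ring
    _ ≤ R / (t + 1) := by
      rw [div_le_div_iff₀ (by positivity) (by positivity)]
      linear_combination hR

lemma le_div_of_recursion {Γ : ℕ → K} {t₀ : ℕ} (ht₀ : 0 < t₀) (hηt₀ : η ≤ t₀)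
    (hR : 0 ≤ R) (hβR : β ≤ (η - 1) * R)
    (hrec : ∀ t : ℕ, t₀ ≤ t → Γ (t + 1) ≤ (1 - η / t) * Γ t + β / (t : K) ^ 2)
    (hΓ : Γ t₀ ≤ R / t₀) (t : ℕ) (ht : t₀ ≤ t) : Γ t ≤ R / t := by
  induction t, ht using Nat.le_induction with
  | base => exact hΓ
  | succ t ht ih =>
    have ht_pos : (0 : K) < t := Nat.cast_pos.2 (ht₀.trans_le ht)
    have hηt : η ≤ t := hηt₀.trans (Nat.cast_le.2 ht)
    rw [Nat.cast_add_one]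
    exact (hrec t ht).trans (one_sub_div_mul_add_div_sq_le_div_add_one ht_pos hηt hR hβR ih)

theorem recursion_bound_general (hη : η ∈ Set.Ioc (1 : K) 2) {Γ : ℕ → K} (hΓ1 : 0 ≤ Γ 1)
    (hrec : ∀ t : ℕ, 1 ≤ t → Γ (t + 1) ≤ (1 - η / t) * Γ t + β / (t : K) ^ 2)
    (t : ℕ) (ht : 1 ≤ t) :
    Γ t ≤ max (Γ 1) (max (2 * β) (β / (η - 1))) / t := by
  set R := max (Γ 1) (max (2 * β) (β / (η - 1)))
  have hΓR : Γ 1 ≤ R := le_max_left _ _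
  have h2βR : 2 * β ≤ R := le_max_of_le_right (le_max_left _ _)
  have hβR : β ≤ (η - 1) * R :=
    (div_le_iff₀' (sub_pos.2 hη.1)).1 (le_max_of_le_right (le_max_right _ _))
  have hΓ2 : Γ 2 ≤ β := calc
    Γ 2 ≤ (1 - η) * Γ 1 + β := by simpa using hrec 1 le_rfl
    _ ≤ β := add_le_of_nonpos_left (mul_nonpos_of_nonpos_of_nonneg (sub_nonpos.2 hη.1.le) hΓ1)
  have hΓ2R : Γ 2 ≤ R / (2 : ℕ) := by
    rw [Nat.cast_ofNat, le_div_iff₀' two_pos]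
    linarith
  rcases ht.eq_or_lt with rfl | ht2
  · simpa using hΓR
  · exact le_div_of_recursion two_pos (by exact_mod_cast hη.2) (hΓ1.trans hΓR) hβR
      (fun s hs ↦ hrec s (one_le_two.trans hs)) hΓ2R t ht2

end OrderedField

lemma div_le_sq_larger_root {a b c : ℝ} (ha : 0 < a) (hb : 0 ≤ b)
    (hdiscrim : 0 ≤ b ^ 2 + 4 * a * c) :
    c / a ≤ ((b + √(b ^ 2 + 4 * a * c)) / (2 * a)) ^ 2 := by
  set s := √(b ^ 2 + 4 * a * c)
  set x := (b + s) / (2 * a)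
  have hx : 0 ≤ x := by positivity
  have hs : discrim a (-b) (-c) = s * s := by
    rw [Real.mul_self_sqrt hdiscrim, discrim]
    ring
  have hroot : a * x ^ 2 = b * x + c := by
    have := (quadratic_eq_zero_iff ha.ne' hs x).2 (Or.inl (by rw [neg_neg]))
    linear_combination this
  rw [div_le_iff₀' ha, hroot]
  exact le_add_of_nonneg_left (mul_nonneg hb hx)

/-- The paper's recursion lemma (Lemma `recursion bounds`): if `Γ₁ ≥ 0` and
`Γ_{t+1} ≤ (1 - η/t) Γ_t + β/t²` with `η ∈ (1, 2]`, then `Γ_t ≤ R/t` for all `t ≥ 1`,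
where `R = max{Γ₁, 2β, R₀²}` and `R₀ = (β₀ + √(β₀² + 4(η-1)β)) / (2(η-1))`. -/
theorem recursion_bound (η β β₀ : ℝ) (hη : η ∈ Set.Ioc (1 : ℝ) 2)
    (hβ : 0 < β) (hβ₀ : 0 < β₀) (Γ : ℕ → ℝ) (hΓ1 : 0 ≤ Γ 1)
    (hrec : ∀ t : ℕ, 1 ≤ t → Γ (t + 1) ≤ (1 - η / t) * Γ t + β / (t : ℝ) ^ 2) :
    ∀ t : ℕ, 1 ≤ t →
      Γ t ≤ max (Γ 1) (max (2 * β)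
        (((β₀ + Real.sqrt (β₀ ^ 2 + 4 * (η - 1) * β)) / (2 * (η - 1))) ^ 2)) / t := by
  intro t ht
  have hη1 : 0 < η - 1 := sub_pos.2 hη.1
  refine (recursion_bound_general hη hΓ1 hrec t ht).trans ?_
  gcongr
  exact div_le_sq_larger_root hη1 hβ₀.le (by positivity)
end

section
/- Let B > 0, ε > 0, ϑ ∈ (0, 1], and set η := εϑ/(2B); assume η ≤ 1/2. Let (e_t)_{t ≥ 1} be a real sequence with e₁ > 0 satisfying e_{t+1} ≤ (1 − 2η)·e_t + 2η²·B for all t ≥ 1. Then for every natural number T with T ≥ B·log(2e₁/ε)/(ϑε), one has e_{T+1} ≤ ε. -/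
/-! The level `c = ηB` is the fixed point of the affine map `x ↦ (1 - 2η) x + 2η²B`, so the
recursion contracts `e t - c` by the factor `1 - 2η ≤ exp (-2η)` at each step. Here
`c = εϑ/2 ≤ ε/2`, and the bound on `T` is exactly what makes `exp (-2ηT) e₁ ≤ ε/2`. -/

theorem sub_le_pow_mul_sub_of_le_affine {R : Type*} [Ring R] [PartialOrder R] [IsOrderedRing R]
    {q c : R} (hq : 0 ≤ q) {e : ℕ → R} {n : ℕ}
    (hrec : ∀ k < n, e (k + 1) ≤ q * e k + (1 - q) * c) :
    e n - c ≤ q ^ n * (e 0 - c) := by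
  have deviation_le (k : ℕ) (hk : k < n) : e (k + 1) - c ≤ q * (e k - c) :=
    calc e (k + 1) - c ≤ q * e k + (1 - q) * c - c := sub_le_sub_right (hrec k hk) c
      _ = q * (e k - c) := by noncomm_ring
  exact (monotone_mul_left_of_nonneg hq).seq_le_seq (x := fun k ↦ e k - c)
    (y := fun k ↦ q ^ k * (e 0 - c)) n (by simp) deviation_le
    fun k _ ↦ by rw [pow_succ', mul_assoc]

theorem one_sub_pow_le_exp_neg_mul {a : ℝ} (ha : a ≤ 1) (n : ℕ) :
    (1 - a) ^ n ≤ Real.exp (-(a * n)) :=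
  calc (1 - a) ^ n ≤ Real.exp (-a) ^ n :=
        pow_le_pow_left₀ (sub_nonneg.2 ha) (Real.one_sub_le_exp_neg a) n
    _ = Real.exp (-(a * n)) := by rw [← Real.exp_nat_mul, mul_neg, mul_comm]

theorem one_sub_pow_mul_le_of_log_div_le {a x δ : ℝ} (ha : a ≤ 1) (hx : 0 < x) (hδ : 0 < δ)
    {n : ℕ} (hn : Real.log (x / δ) ≤ a * n) : (1 - a) ^ n * x ≤ δ :=
  calc (1 - a) ^ n * x ≤ Real.exp (-(a * n)) * x := by
        gcongr
        exact one_sub_pow_le_exp_neg_mul ha n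
    _ ≤ Real.exp (-Real.log (x / δ)) * x := by gcongr
    _ = δ := by
        rw [Real.exp_neg, Real.exp_log (div_pos hx hδ), inv_div, div_mul_cancel₀ δ hx.ne']

theorem le_add_of_le_affine_of_log_div_le {a c δ : ℝ} (ha : a ≤ 1) (hc : 0 ≤ c) (hδ : 0 < δ)
    {e : ℕ → ℝ} (he : 0 < e 0) {n : ℕ}
    (hrec : ∀ k < n, e (k + 1) ≤ (1 - a) * e k + a * c)
    (hn : Real.log (e 0 / δ) ≤ a * n) : e n ≤ δ + c := by
  have hq : 0 ≤ 1 - a := sub_nonneg.2 ha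
  have contraction : e n - c ≤ (1 - a) ^ n * (e 0 - c) :=
    sub_le_pow_mul_sub_of_le_affine hq (by simpa only [sub_sub_cancel] using hrec)
  have initial_error : (1 - a) ^ n * e 0 ≤ δ := one_sub_pow_mul_le_of_log_div_le ha he hδ hn
  have discarded : 0 ≤ (1 - a) ^ n * c := by positivity
  linarith

/-- Deterministic core of the paper's Lemma 5 (error due to random data, constant stepsize):
with `η = εϑ/(2B)`, the recursion `e_{t+1} ≤ (1 - 2η) e_t + 2η²B` reaches accuracy `ε` after
`T ≥ B log(2e₁/ε)/(ϑε)` iterations. -/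
theorem error_recursion_constant_eps (B ε ϑ : ℝ) (hB : 0 < B) (hε : 0 < ε)
    (hϑ : ϑ ∈ Set.Ioc (0 : ℝ) 1) (η : ℝ) (hη : η = ε * ϑ / (2 * B)) (hη2 : η ≤ 1 / 2)
    (e : ℕ → ℝ) (he1 : 0 < e 1)
    (hrec : ∀ t : ℕ, 1 ≤ t → e (t + 1) ≤ (1 - 2 * η) * e t + 2 * η ^ 2 * B) :
    ∀ T : ℕ, (T : ℝ) ≥ B * Real.log (2 * e 1 / ε) / (ϑ * ε) → e (T + 1) ≤ ε := by
  intro T hT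
  obtain ⟨hϑ_pos, hϑ_le_one⟩ := hϑ
  have level : η * B = ε * ϑ / 2 := by rw [hη]; field_simp
  have level_nonneg : 0 ≤ η * B := by rw [level]; positivity
  have level_le : η * B ≤ ε / 2 := by
    rw [level]
    gcongr
    exact mul_le_of_le_one_right hε.le hϑ_le_one
  have log_le : Real.log (e 1 / (ε / 2)) ≤ 2 * η * T :=
    calc Real.log (e 1 / (ε / 2))
        = 2 * η * (B * Real.log (2 * e 1 / ε) / (ϑ * ε)) := by
          rw [hη, div_div_eq_mul_div, mul_comm (e 1)]
          field_simp
      _ ≤ 2 * η * T := by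
          have : 0 ≤ η := nonneg_of_mul_nonneg_left level_nonneg hB
          gcongr
  calc e (T + 1) ≤ ε / 2 + η * B :=
        le_add_of_le_affine_of_log_div_le (e := fun t ↦ e (t + 1)) (by linarith) level_nonneg
          (half_pos hε) he1 (fun t _ ↦ (hrec (t + 1) t.succ_pos).trans_eq (by ring)) log_le
    _ ≤ ε := by linarith
end
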